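/- The modular discriminant satisfies Δ(z) = (E₄(z)³ − E₆(z)²)/1728 for every z in the upper half-plane ℍ; equivalently, as level-one modular forms of weight 12, Δ = (E₄³ − E₆²)/1728. -/

import Mathlib

/-!
The identity is the statement that the weight-12 level-one form `E₄³ - E₆²` is a cusp form, that
the space of such cusp forms is one-dimensional, spanned by `η²⁴`, and that the `q`-coefficient of
`E₄³ - E₆²` is `3 · 240 + 2 · 504 = 1728`. Mathlib proves this for its modular forms
(`ModularForm.discriminant_eq_E₄_cube_sub_E₆_sq`). It remains to identify those forms with the
explicit `q`-series: the product `q ∏ (1 - qⁿ)²⁴` is a reindexing of the one for `η²⁴`, and the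
lattice-sum Eisenstein series have `q`-expansion `1 - (2k / B_k) ∑ σ_{k-1}(n) qⁿ`, where
`B₄ = -1/30` and `B₆ = 1/42` give the constants `240` and `-504`.
-/


open Complex

/-- The normalized weight-2 Eisenstein series `E₂` on the upper half-plane (constant term 1),
given by its `q`-expansion `1 - 24 ∑ σ₁(n) qⁿ`, extended by the same formula to all of `ℂ`. -/
noncomputable def E₂ (z : ℂ) : ℂ :=
  1 - 24 * ∑' n : ℕ+, (ArithmeticFunction.sigma 1 (n : ℕ) : ℂ) *
    Complex.exp (2 * Real.pi * I * (n : ℕ) * z)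

/-- The normalized weight-4 Eisenstein series `E₄` (constant term 1),
given by its `q`-expansion `1 + 240 ∑ σ₃(n) qⁿ`. -/
noncomputable def E₄ (z : ℂ) : ℂ :=
  1 + 240 * ∑' n : ℕ+, (ArithmeticFunction.sigma 3 (n : ℕ) : ℂ) *
    Complex.exp (2 * Real.pi * I * (n : ℕ) * z)

/-- The normalized weight-6 Eisenstein series `E₆` (constant term 1),
given by its `q`-expansion `1 - 504 ∑ σ₅(n) qⁿ`. -/
noncomputable def E₆ (z : ℂ) : ℂ :=
  1 - 504 * ∑' n : ℕ+, (ArithmeticFunction.sigma 5 (n : ℕ) : ℂ) *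
    Complex.exp (2 * Real.pi * I * (n : ℕ) * z)

/-- The modular discriminant `Δ = (E₄³ - E₆²) / 1728`. -/
noncomputable def Δ (z : ℂ) : ℂ := (E₄ z ^ 3 - E₆ z ^ 2) / 1728

/-- Viazovska's weakly holomorphic quasimodular form `φ₀ = (E₂E₄ - E₆)² / Δ`. -/
noncomputable def φ₀ (z : ℂ) : ℂ := (E₂ z * E₄ z - E₆ z) ^ 2 / Δ z

/-- The Jacobi theta-nullwert `θ₀₀(z) = ∑_{n ∈ ℤ} e^{πin²z}`. -/
noncomputable def θ₀₀ (z : ℂ) : ℂ := ∑' n : ℤ, Complex.exp (Real.pi * I * (n : ℂ) ^ 2 * z)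

/-- The Jacobi theta-nullwert `θ₀₁(z) = ∑_{n ∈ ℤ} (-1)ⁿ e^{πin²z}`. -/
noncomputable def θ₀₁ (z : ℂ) : ℂ :=
  ∑' n : ℤ, (-1 : ℂ) ^ n * Complex.exp (Real.pi * I * (n : ℂ) ^ 2 * z)

/-- The Jacobi theta-nullwert `θ₁₀(z) = ∑_{n ∈ ℤ} e^{πi(n+1/2)²z}`. -/
noncomputable def θ₁₀ (z : ℂ) : ℂ :=
  ∑' n : ℤ, Complex.exp (Real.pi * I * ((n : ℂ) + 1 / 2) ^ 2 * z)

/-- Viazovska's modular form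
`ψ_S = 128((θ₀₁⁴ - θ₁₀⁴)/θ₀₀⁸ - (θ₁₀⁴ + θ₀₀⁴)/θ₀₁⁸)`. -/
noncomputable def ψS (z : ℂ) : ℂ :=
  128 * ((θ₀₁ z ^ 4 - θ₁₀ z ^ 4) / θ₀₀ z ^ 8 - (θ₁₀ z ^ 4 + θ₀₀ z ^ 4) / θ₀₁ z ^ 8)

/-- The modular discriminant, defined by its product expansion
`Δ(z) = q ∏_{n ≥ 1} (1 - qⁿ)²⁴` with `q = e^{2πiz}`. -/
noncomputable def discriminant (z : ℂ) : ℂ :=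
  Complex.exp (2 * Real.pi * I * z) *
    ∏' n : ℕ+, (1 - Complex.exp (2 * Real.pi * I * z) ^ (n : ℕ)) ^ 24

lemma discriminant_eq_modularForm (τ : UpperHalfPlane) :
    discriminant τ = ModularForm.discriminant τ := by
  rw [ModularForm.discriminant_eq_q_prod, discriminant,
    tprod_pnat_eq_tprod_succ
      (f := fun n ↦ (1 - Complex.exp (2 * Real.pi * I * (τ : ℂ)) ^ n) ^ 24)]
  simp only [ModularForm.eta_q_eq_pow]
  simp [Function.Periodic.qParam]

lemma bernoulli_six : bernoulli 6 = 1 / 42 := by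
  rw [bernoulli_eq_bernoulli'_of_ne_one (by norm_num)]
  have h5 : bernoulli' 5 = 0 := bernoulli'_eq_zero_of_odd (by decide) (by norm_num)
  rw [bernoulli'_def]
  norm_num [Finset.sum_range_succ, h5, Nat.choose]

lemma exp_mul_eq_zpow (z : ℂ) (n : ℕ) : Complex.exp (2 * Real.pi * I * n * z) =
    Complex.exp (2 * Real.pi * I * z) ^ (n : ℤ) := by
  rw [zpow_natCast, ← Complex.exp_nat_mul]
  ring_nf

lemma E₄_eq_modularForm (τ : UpperHalfPlane) : E₄ τ = ModularForm.E₄ τ := by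
  rw [EisensteinSeries.q_expansion_bernoulli _ (by decide),
    bernoulli_eq_bernoulli'_of_ne_one (by norm_num), bernoulli'_four, E₄]
  simp only [exp_mul_eq_zpow]
  norm_num

lemma E₆_eq_modularForm (τ : UpperHalfPlane) : E₆ τ = ModularForm.E₆ τ := by
  rw [EisensteinSeries.q_expansion_bernoulli _ (by decide), bernoulli_six, E₆]
  simp only [exp_mul_eq_zpow]
  norm_num

/-- The modular discriminant satisfies `Δ = (E₄³ - E₆²) / 1728` on the upper half-plane. -/
theorem discriminant_eq (z : ℂ) (hz : 0 < z.im) :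
    discriminant z = (E₄ z ^ 3 - E₆ z ^ 2) / 1728 := by
  lift z to UpperHalfPlane using hz
  rw [discriminant_eq_modularForm, E₄_eq_modularForm, E₆_eq_modularForm]
  exact ModularForm.discriminant_eq_E₄_cube_sub_E₆_sq z
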